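/- arXiv:2405.16651 — 2 statements merged into one kernel-verified Lean document; each statement's English description precedes it below -/
import Mathlib

section
/- Let M ≥ 1, N ≥ 1, let B be a real N×N matrix, let b₀ > 0, and suppose ‖B‖ ≤ 1 + b₀, where ‖·‖ is the spectral norm. Let S be the M×M subdiagonal shift matrix. Then the inverse of I_{MN} − S ⊗ B satisfies ‖(I_{MN} − S ⊗ B)⁻¹‖ ≤ ((1 + b₀)^M − 1)/b₀. -/
open Matrix
open scoped Kronecker

/-- The ℓ²→ℓ² operator (spectral) norm of a matrix. -/
noncomputable def specNorm {𝕜 : Type*} [RCLike 𝕜] {n : Type*} [Fintype n] [DecidableEq n]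
    (A : Matrix n n 𝕜) : ℝ :=
  ‖LinearMap.toContinuousLinearMap (Matrix.toEuclideanLin A)‖

/-- The M×M subdiagonal shift matrix: entry (i,j) is 1 if i = j+1 and 0 otherwise. -/
def shiftMatrix (M : ℕ) : Matrix (Fin M) (Fin M) ℝ :=
  Matrix.of fun i j => if (i : ℕ) = (j : ℕ) + 1 then 1 else 0

open scoped Matrix.Norms.L2Operator

lemma specNorm_eq_l2 {n : Type*} [Fintype n] [DecidableEq n] (A : Matrix n n ℝ) :
    specNorm A = ‖A‖ := by
  rw [Matrix.l2_opNorm_def]; rfl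

lemma sum_sq_mulVec_le {n : Type*} [Fintype n] [DecidableEq n] (A : Matrix n n ℝ) (c : ℝ)
    (h : ‖A‖ ≤ c) (v : n → ℝ) : ∑ i, (A *ᵥ v) i ^ 2 ≤ c ^ 2 * ∑ i, v i ^ 2 := by
  have h1 := Matrix.l2_opNorm_mulVec A (WithLp.toLp 2 v)
  have h2 : ‖WithLp.toLp 2 (A *ᵥ v)‖ ≤ c * ‖WithLp.toLp 2 v‖ :=
    h1.trans (mul_le_mul_of_nonneg_right h (norm_nonneg _))
  have h3 := pow_le_pow_left₀ (norm_nonneg _) h2 2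
  rw [mul_pow, EuclideanSpace.norm_sq_eq, EuclideanSpace.norm_sq_eq] at h3
  simpa using h3

lemma norm_le_of_sum_sq {n : Type*} [Fintype n] [DecidableEq n] (A : Matrix n n ℝ) (c : ℝ)
    (hc : 0 ≤ c) (h : ∀ v : n → ℝ, ∑ i, (A *ᵥ v) i ^ 2 ≤ c ^ 2 * ∑ i, v i ^ 2) : ‖A‖ ≤ c := by
  rw [Matrix.l2_opNorm_def]
  refine ContinuousLinearMap.opNorm_le_bound _ hc fun x => ?_
  refine le_of_sq_le_sq ?_ (by positivity)
  rw [mul_pow, EuclideanSpace.norm_sq_eq, EuclideanSpace.norm_sq_eq]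
  simpa using h x.ofLp

lemma shift_sq_le (M : ℕ) (x : Fin M → ℝ) :
    ∑ i, (shiftMatrix M *ᵥ x) i ^ 2 ≤ ∑ i, x i ^ 2 := by
  have h1 : ∀ i, (shiftMatrix M *ᵥ x) i ^ 2 ≤ ∑ k, shiftMatrix M i k * x k ^ 2 := by
    intro i
    by_cases hi : ∃ k : Fin M, (i : ℕ) = k + 1
    · obtain ⟨k, hk⟩ := hi
      have e : ∀ j : Fin M, shiftMatrix M i j = if j = k then 1 else 0 := by
        intro j
        simp only [shiftMatrix, Matrix.of_apply, hk, Fin.ext_iff]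
        congr 1
        simp [eq_comm]
      simp [Matrix.mulVec, dotProduct, e]
    · push Not at hi
      simp [Matrix.mulVec, dotProduct, shiftMatrix, hi]
  refine (Finset.sum_le_sum fun i _ => h1 i).trans ?_
  rw [Finset.sum_comm]
  refine Finset.sum_le_sum fun k _ => ?_
  rw [← Finset.sum_mul]
  have h2 : ∑ i, shiftMatrix M i k ≤ 1 := by
    by_cases hk : ∃ i : Fin M, (i : ℕ) = k + 1
    · obtain ⟨i, hi⟩ := hk
      have e : ∀ j : Fin M, shiftMatrix M j k = if j = i then 1 else 0 := by
        intro j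
        simp only [shiftMatrix, Matrix.of_apply, ← hi, Fin.ext_iff]
      simp [e]
    · push Not at hk
      simp [shiftMatrix, hk]
  nlinarith [sq_nonneg (x k)]

lemma norm_shift_kron_le {M N : ℕ} (B : Matrix (Fin N) (Fin N) ℝ) (c : ℝ) (hc : 0 ≤ c)
    (h : ‖B‖ ≤ c) : ‖shiftMatrix M ⊗ₖ B‖ ≤ c := by
  refine norm_le_of_sum_sq _ c hc fun v => ?_
  have e : ∀ i j, ((shiftMatrix M ⊗ₖ B) *ᵥ v) (i, j) =
      (B *ᵥ (fun l => (shiftMatrix M *ᵥ fun k => v (k, l)) i)) j := by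
    intro i j
    simp only [Matrix.mulVec, dotProduct, Fintype.sum_prod_type, Matrix.kroneckerMap_apply,
      Finset.mul_sum]
    rw [Finset.sum_comm]
    refine Finset.sum_congr rfl fun _ _ => Finset.sum_congr rfl fun _ _ => by ring
  simp only [Fintype.sum_prod_type, e]
  refine (Finset.sum_le_sum fun i _ => sum_sq_mulVec_le B c h _).trans ?_
  rw [← Finset.mul_sum]
  refine mul_le_mul_of_nonneg_left ?_ (sq_nonneg c)
  rw [Finset.sum_comm]
  conv_rhs => rw [Finset.sum_comm]
  exact Finset.sum_le_sum fun l _ => shift_sq_le M _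

lemma shift_kron_pow_apply {M N : ℕ} (B : Matrix (Fin N) (Fin N) ℝ) (k : ℕ) :
    ∀ p q : Fin M × Fin N, (p.1 : ℕ) < k → ((shiftMatrix M ⊗ₖ B) ^ k) p q = 0 := by
  induction k with
  | zero => intro p q h; omega
  | succ k ih =>
    intro p q h
    rw [pow_succ', Matrix.mul_apply]
    refine Finset.sum_eq_zero fun r _ => ?_
    by_cases hr : (p.1 : ℕ) = r.1 + 1
    · rw [ih r q (by omega), mul_zero]
    · simp [Matrix.kroneckerMap_apply, shiftMatrix, hr]

theorem stmt5 {M N : ℕ} (hM : 1 ≤ M) (hN : 1 ≤ N)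
    (B : Matrix (Fin N) (Fin N) ℝ) (b₀ : ℝ) (hb₀ : 0 < b₀)
    (hB : specNorm B ≤ 1 + b₀) :
    specNorm ((1 : Matrix (Fin M × Fin N) (Fin M × Fin N) ℝ) - shiftMatrix M ⊗ₖ B)⁻¹
      ≤ ((1 + b₀) ^ M - 1) / b₀ := by
  rw [specNorm_eq_l2] at hB ⊢
  have hT := norm_shift_kron_le (M := M) B (1 + b₀) (by linarith) hB
  have hTM : (shiftMatrix M ⊗ₖ B) ^ M = 0 := by
    ext p q
    exact shift_kron_pow_apply B M p q p.1.2
  generalize shiftMatrix M ⊗ₖ B = T at hT hTM ⊢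
  have hinv : (1 - T)⁻¹ = ∑ k ∈ Finset.range M, T ^ k := by
    apply Matrix.inv_eq_right_inv
    rw [mul_neg_geom_sum, hTM, sub_zero]
  have hone : ‖(1 : Matrix (Fin M × Fin N) (Fin M × Fin N) ℝ)‖ ≤ 1 :=
    norm_le_of_sum_sq _ 1 zero_le_one fun v => by simp
  have hpow : ∀ k, ‖T ^ k‖ ≤ (1 + b₀) ^ k := by
    intro k
    induction k with
    | zero => simpa using hone
    | succ k ih =>
      rw [pow_succ, pow_succ]
      exact (Matrix.l2_opNorm_mul _ _).trans (mul_le_mul ih hT (norm_nonneg _) (by positivity))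
  rw [hinv]
  refine (norm_sum_le _ _).trans ((Finset.sum_le_sum fun k _ => hpow k).trans ?_)
  rw [geom_sum_eq (by linarith)]
  simp
end

section
/- Let M ≥ 1, N ≥ 1, let A be a real N×N matrix, and let h > 0 be such that I_N − h·A is invertible, with B = (I_N − h·A)⁻¹. Let Ã_b = I_{MN} − S ⊗ I_N − h·(E ⊗ A) be the backward-Euler block matrix. Then Ã_b is invertible, and its inverse is the block lower-triangular matrix C whose (i,j) block (1 ≤ j ≤ i ≤ M) is C_{i1} = B^{i−1} for j = 1, C_{ij} = B^{i−j+1} for 2 ≤ j ≤ i, and C_{ij} = 0 for j > i; that is, Ã_b · C = I_{MN}. -/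
open Matrix
open scoped Kronecker

/-- The M×M diagonal matrix with first diagonal entry 0 and all other diagonal entries 1. -/
def ediagMatrix (M : ℕ) : Matrix (Fin M) (Fin M) ℝ :=
  Matrix.of fun i j => if i = j ∧ (i : ℕ) ≠ 0 then 1 else 0

/-- The block lower-triangular matrix whose (i,j) block (0-based indices) is `B^i` for
`j = 0`, `B^(i-j+1)` for `1 ≤ j ≤ i`, and `0` for `j > i`. -/
def blockInv {M N : ℕ} (B : Matrix (Fin N) (Fin N) ℝ) :
    Matrix (Fin M × Fin N) (Fin M × Fin N) ℝ :=
  Matrix.of fun p q =>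
    if (q.1 : ℕ) = 0 then (B ^ (p.1 : ℕ)) p.2 q.2
    else if (q.1 : ℕ) ≤ (p.1 : ℕ) then (B ^ ((p.1 : ℕ) - (q.1 : ℕ) + 1)) p.2 q.2
    else 0

/-- The `(i,j)` block of `blockInv`. -/
def blk {N : ℕ} (B : Matrix (Fin N) (Fin N) ℝ) (i j : ℕ) : Matrix (Fin N) (Fin N) ℝ :=
  if j = 0 then B ^ i else if j ≤ i then B ^ (i - j + 1) else 0

theorem blockInv_apply {M N : ℕ} (B : Matrix (Fin N) (Fin N) ℝ) (i j : Fin M) (a b : Fin N) :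
    blockInv B (i, a) (j, b) = blk B i j a b := by
  simp only [blockInv, blk, Matrix.of_apply]
  split_ifs <;> simp

theorem shift_mul {M N : ℕ} (B : Matrix (Fin N) (Fin N) ℝ) (i j : Fin M) (a b : Fin N) :
    ((shiftMatrix M ⊗ₖ (1 : Matrix (Fin N) (Fin N) ℝ)) * blockInv B : Matrix (Fin M × Fin N) (Fin M × Fin N) ℝ) (i, a) (j, b)
      = if (i : ℕ) = 0 then 0 else blk B (i - 1) j a b := by
  simp only [Matrix.mul_apply, Fintype.sum_prod_type, Matrix.kroneckerMap_apply, blockInv_apply,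
    shiftMatrix, Matrix.of_apply, Matrix.one_apply]
  simp only [mul_ite, mul_one, mul_zero, ite_mul, zero_mul, one_mul, Finset.sum_ite_eq,
    Finset.mem_univ, if_true]
  split_ifs with h0
  · exact Finset.sum_eq_zero fun k _ => if_neg (by omega)
  · rw [Finset.sum_eq_single (⟨i - 1, by omega⟩ : Fin M)]
    · rw [if_pos]
      show (i : ℕ) = i - 1 + 1
      omega
    · intro k _ hk
      refine if_neg fun h => hk (Fin.ext ?_)
      show (k : ℕ) = i - 1
      omega
    · simp

theorem ediag_mul {M N : ℕ} (A B : Matrix (Fin N) (Fin N) ℝ) (i j : Fin M) (a b : Fin N) :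
    ((ediagMatrix M ⊗ₖ A) * blockInv B : Matrix (Fin M × Fin N) (Fin M × Fin N) ℝ) (i, a) (j, b)
      = if (i : ℕ) = 0 then 0 else (A * blk B i j) a b := by
  simp only [Matrix.mul_apply, Fintype.sum_prod_type, Matrix.kroneckerMap_apply, blockInv_apply,
    ediagMatrix, Matrix.of_apply]
  rw [Finset.sum_eq_single i]
  · split_ifs with h1 h2 h2 <;> simp_all
  · intro k _ hk
    simp [hk.symm]
  · simp

theorem stmt15 {M N : ℕ} (hM : 1 ≤ M) (hN : 1 ≤ N)
    (A : Matrix (Fin N) (Fin N) ℝ) (h : ℝ) (hh : 0 < h)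
    (hinv : IsUnit ((1 : Matrix (Fin N) (Fin N) ℝ) - h • A))
    (B : Matrix (Fin N) (Fin N) ℝ)
    (hB : B = ((1 : Matrix (Fin N) (Fin N) ℝ) - h • A)⁻¹) :
    IsUnit ((1 : Matrix (Fin M × Fin N) (Fin M × Fin N) ℝ)
        - shiftMatrix M ⊗ₖ (1 : Matrix (Fin N) (Fin N) ℝ)
        - h • (ediagMatrix M ⊗ₖ A)) ∧
      ((1 : Matrix (Fin M × Fin N) (Fin M × Fin N) ℝ)
        - shiftMatrix M ⊗ₖ (1 : Matrix (Fin N) (Fin N) ℝ)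
        - h • (ediagMatrix M ⊗ₖ A)) * blockInv B = 1 := by
  have hd : IsUnit ((1 : Matrix (Fin N) (Fin N) ℝ) - h • A).det :=
    (Matrix.isUnit_iff_isUnit_det _).1 hinv
  have h1 : (1 - h • A) * B = 1 := by rw [hB]; exact Matrix.mul_nonsing_inv _ hd
  have h2 : ∀ n, B ^ (n + 1) - h • (A * B ^ (n + 1)) = B ^ n := by
    intro n
    have : (1 - h • A) * B ^ (n + 1) = B ^ n := by
      rw [pow_succ', ← mul_assoc, h1, one_mul]
    rwa [sub_mul, one_mul, smul_mul_assoc] at this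
  have key : ((1 : Matrix (Fin M × Fin N) (Fin M × Fin N) ℝ)
        - shiftMatrix M ⊗ₖ (1 : Matrix (Fin N) (Fin N) ℝ)
        - h • (ediagMatrix M ⊗ₖ A)) * blockInv B = 1 := by
    ext ⟨i, a⟩ ⟨j, b⟩
    rw [sub_mul, sub_mul, one_mul, smul_mul_assoc, Matrix.sub_apply, Matrix.sub_apply,
      Matrix.smul_apply, shift_mul, ediag_mul, blockInv_apply]
    have hone : (1 : Matrix (Fin M × Fin N) (Fin M × Fin N) ℝ) (i, a) (j, b)
        = (if (i : ℕ) = j then (1 : Matrix (Fin N) (Fin N) ℝ) else 0) a b := by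
      by_cases hij : i = j
      · simp [hij, Matrix.one_apply]
      · have : (i : ℕ) ≠ j := fun h => hij (Fin.ext h)
        simp [hij, this, Matrix.one_apply]
    rw [hone]
    generalize (i : ℕ) = m
    generalize (j : ℕ) = n
    rcases m with _ | m
    · rcases n with _ | n <;> simp [blk]
    · have h3 : blk B (m + 1) n - blk B m n - h • (A * blk B (m + 1) n)
          = if m + 1 = n then 1 else 0 := by
        rcases n with _ | n
        · simp only [blk, if_true]
          rw [sub_right_comm, h2]; simp
        · rcases lt_trichotomy m n with hl | hl | hl
          · simp [blk, show ¬ n ≤ m by omega, show ¬ n + 1 ≤ m by omega, hl.ne]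
          · subst hl
            have := h2 0
            simpa [blk] using this
          · obtain ⟨k, rfl⟩ := Nat.exists_eq_add_of_lt hl
            have e1 : n + k + 1 + 1 - (n + 1) + 1 = k + 1 + 1 := by omega
            have e2 : n + k + 1 - (n + 1) + 1 = k + 1 := by omega
            simp only [blk]
            rw [if_neg (by omega), if_pos (by omega), if_neg (by omega), if_pos (by omega),
              if_neg (by omega), e1, e2, sub_right_comm, h2, sub_self]
      have h4 := congrFun (congrFun h3 a) b
      simpa using h4
  exact ⟨(Matrix.isUnit_iff_isUnit_det _).2 (Matrix.isUnit_det_of_right_inverse key), key⟩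
end
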